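/- (Corollary 1, unanimous acceptance group rule.) In the two-group voting model, for every j₁ ∈ S₁ and j₂ ∈ S₂, E[X_{j₁}·1_{G₁ ∩ G₂}] − E[X_{j₂}·1_{G₁ ∩ G₂}] = σ₁·f₁·F₂ − σ₂·f₂·F₁. -/

import Mathlib

open MeasureTheory ProbabilityTheory Real Set

/-- Density of the standard normal distribution. -/
noncomputable def stdPdf (y : ℝ) : ℝ := (Real.sqrt (2 * Real.pi))⁻¹ * Real.exp (-(y ^ 2) / 2)

/-- Cumulative distribution function of the standard normal distribution. -/
noncomputable def stdCdf (y : ℝ) : ℝ := ∫ x in Set.Iic y, stdPdf x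

/-!
Since `A₂` is independent of `(X_{j₁}, A₁)`, the expectation of `X_{j₁}` over `G₁ ∩ G₂` is
`E[X_{j₁}·1_{G₁}] · P(G₂)`. The members of `S₁` are exchangeable and `G₁` depends on their average
only, so each of them has the same expectation over `G₁` as the average `A₁` itself. As `A₁` is
normal with mean `μ` and standard deviation `σ₁`, its truncated mean is `μ·F₁ + σ₁·f₁`, because
`-φ` is an antiderivative of `z ↦ z·φ(z)`. In the difference of the two expectations the terms
`μ·F₁·F₂` cancel.
-/

open Filter
open scoped NNReal Topology

section StandardNormal

theorem stdPdf_eq_gaussianPDFReal : stdPdf = gaussianPDFReal 0 1 := by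
  ext z
  simp [stdPdf, gaussianPDFReal]

theorem stdCdf_eq_measureReal_Iio (a : ℝ) : stdCdf a = (gaussianReal 0 1).real (Iio a) := by
  have hnonneg : 0 ≤ᵐ[volume.restrict (Iio a)] gaussianPDFReal 0 1 :=
    ae_of_all _ (gaussianPDFReal_nonneg 0 1)
  rw [stdCdf, stdPdf_eq_gaussianPDFReal, integral_Iic_eq_integral_Iio, measureReal_def,
    gaussianReal_apply_eq_integral 0 one_ne_zero,
    ENNReal.toReal_ofReal (integral_nonneg_of_ae hnonneg)]

theorem hasDerivAt_neg_stdPdf (z : ℝ) : HasDerivAt (fun y => -stdPdf y) (z * stdPdf z) z := by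
  have hexponent : HasDerivAt (fun y : ℝ => -(y ^ 2) / 2) (-z) z :=
    ((hasDerivAt_pow 2 z).neg.div_const 2).congr_deriv (by norm_num; ring)
  refine (hexponent.exp.const_mul (√(2 * π))⁻¹).neg.congr_deriv ?_
  simp only [stdPdf]
  ring

theorem tendsto_stdPdf_atBot : Tendsto stdPdf atBot (𝓝 0) := by
  have hsq : Tendsto (fun y : ℝ => y ^ 2) atBot atTop := by
    simpa only [Function.comp_def, neg_sq] using
      (tendsto_pow_atTop two_ne_zero).comp (tendsto_neg_atBot_atTop (G := ℝ))
  have hexponent : Tendsto (fun y : ℝ => -(y ^ 2) / 2) atBot atBot :=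
    (tendsto_neg_atTop_atBot.comp hsq).atBot_div_const two_pos
  have hdensity := (tendsto_exp_atBot.comp hexponent).const_mul (√(2 * π))⁻¹
  rwa [mul_zero] at hdensity

theorem integrable_mul_stdPdf : Integrable (fun z => z * stdPdf z) := by
  convert (integrable_mul_exp_neg_mul_sq (b := 1 / 2) (by norm_num)).const_mul
    (√(2 * π))⁻¹ using 2 with z
  simp only [stdPdf]
  ring_nf

theorem setIntegral_Iio_gaussianReal_zero_one (a : ℝ) :
    ∫ z in Iio a, z ∂gaussianReal 0 1 = -stdPdf a := by
  calc ∫ z in Iio a, z ∂gaussianReal 0 1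
      = ∫ z in Iio a, z * stdPdf z := by
        rw [← integral_indicator measurableSet_Iio,
          integral_gaussianReal_eq_integral_smul one_ne_zero,
          ← integral_indicator measurableSet_Iio, stdPdf_eq_gaussianPDFReal]
        congr with z
        simp only [smul_eq_mul, indicator_apply, mul_ite, mul_zero, mul_comm z]
    _ = -stdPdf a - -0 := by
        rw [← integral_Iic_eq_integral_Iio]
        exact integral_Iic_of_hasDerivAt_of_tendsto' (fun z _ => hasDerivAt_neg_stdPdf z)
          integrable_mul_stdPdf.integrableOn tendsto_stdPdf_atBot.neg
    _ = -stdPdf a := by rw [neg_zero, sub_zero]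

end StandardNormal

section GaussianTail

variable (m : ℝ) {v : ℝ≥0}

-- The reflection makes upper tails of the normal law correspond to lower tails of the standard one.
theorem hasLaw_sub_sqrt_mul_gaussianReal (v : ℝ≥0) :
    HasLaw (fun z => m - √v * z) (gaussianReal m v) (gaussianReal 0 1) := by
  convert gaussianReal_const_sub (gaussianReal_const_mul HasLaw.id √v) m using 2
  · rfl
  · rw [mul_zero, sub_zero]
  · ext
    simp only [mul_one, NNReal.coe_mk, sq_sqrt v.coe_nonneg]

theorem preimage_sub_sqrt_mul_Ioi (hv : v ≠ 0) (t : ℝ) :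
    (fun z => m - √v * z) ⁻¹' Ioi t = Iio ((m - t) / √v) := by
  have hsqrt : 0 < √(v : ℝ) := sqrt_pos.mpr (by positivity)
  ext z
  rw [mem_preimage, mem_Ioi, mem_Iio, lt_div_iff₀' hsqrt, lt_sub_comm]

theorem measureReal_Ioi_gaussianReal (hv : v ≠ 0) (t : ℝ) :
    (gaussianReal m v).real (Ioi t) = stdCdf ((m - t) / √v) := by
  have hlaw := hasLaw_sub_sqrt_mul_gaussianReal m v
  rw [← hlaw.map_eq, map_measureReal_apply_of_aemeasurable hlaw.aemeasurable measurableSet_Ioi,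
    preimage_sub_sqrt_mul_Ioi m hv, stdCdf_eq_measureReal_Iio]

theorem setIntegral_Ioi_gaussianReal (hv : v ≠ 0) (t : ℝ) :
    ∫ x in Ioi t, x ∂gaussianReal m v
      = m * stdCdf ((m - t) / √v) + √v * stdPdf ((m - t) / √v) := by
  have hlaw := hasLaw_sub_sqrt_mul_gaussianReal m v
  have hint : Integrable (fun z : ℝ => z) (gaussianReal 0 1) :=
    memLp_one_iff_integrable.mp (memLp_id_gaussianReal 1)
  calc ∫ x in Ioi t, x ∂gaussianReal m v
      = ∫ z in Iio ((m - t) / √v), (m - √v * z) ∂gaussianReal 0 1 := by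
        rw [← hlaw.map_eq, setIntegral_map measurableSet_Ioi (by fun_prop) hlaw.aemeasurable,
          preimage_sub_sqrt_mul_Ioi m hv]
    _ = m * (gaussianReal 0 1).real (Iio ((m - t) / √v))
          - √v * ∫ z in Iio ((m - t) / √v), z ∂gaussianReal 0 1 := by
        rw [integral_sub (integrable_const m) (hint.integrableOn.const_mul _), setIntegral_const,
          integral_const_mul, smul_eq_mul, mul_comm m]
    _ = _ := by
        rw [← stdCdf_eq_measureReal_Iio, setIntegral_Iio_gaussianReal_zero_one, mul_neg,
          sub_neg_eq_add]

end GaussianTail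

section JointLaw

variable {Ω Ω' α β : Type*} [MeasurableSpace Ω] [MeasurableSpace Ω'] [MeasurableSpace α]
  [MeasurableSpace β] {P : Measure Ω} {Q : Measure Ω'}

theorem setIntegral_preimage_eq_setIntegral_map_prodMk {Y : Ω → ℝ} {U : Ω → α}
    (hYU : AEMeasurable (fun ω => (Y ω, U ω)) P) {B : Set α} (hB : MeasurableSet B) :
    ∫ ω in U ⁻¹' B, Y ω ∂P = ∫ p in univ ×ˢ B, p.1 ∂P.map (fun ω => (Y ω, U ω)) := by
  rw [setIntegral_map (MeasurableSet.univ.prod hB) measurable_fst.aestronglyMeasurable hYU,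
    mk_preimage_prod, preimage_univ, univ_inter]

theorem setIntegral_preimage_eq_of_identDistrib_prodMk {Y : Ω → ℝ} {U : Ω → α} {Y' : Ω' → ℝ}
    {U' : Ω' → α} (h : IdentDistrib (fun ω => (Y ω, U ω)) (fun ω => (Y' ω, U' ω)) P Q)
    {B : Set α} (hB : MeasurableSet B) :
    ∫ ω in U ⁻¹' B, Y ω ∂P = ∫ ω in U' ⁻¹' B, Y' ω ∂Q := by
  rw [setIntegral_preimage_eq_setIntegral_map_prodMk h.aemeasurable_fst hB, h.map_eq,
    setIntegral_preimage_eq_setIntegral_map_prodMk h.aemeasurable_snd hB]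

theorem setIntegral_preimage_inter_preimage_of_indepFun [IsFiniteMeasure P] {Y : Ω → ℝ}
    {U : Ω → α} {V : Ω → β} (hindep : IndepFun (fun ω => (Y ω, U ω)) V P)
    (hYU : AEMeasurable (fun ω => (Y ω, U ω)) P) (hV : AEMeasurable V P) {B : Set α}
    (hB : MeasurableSet B) {C : Set β} (hC : MeasurableSet C) :
    ∫ ω in U ⁻¹' B ∩ V ⁻¹' C, Y ω ∂P = (∫ ω in U ⁻¹' B, Y ω ∂P) * P.real (V ⁻¹' C) := by
  have hfst : Measurable fun p : (ℝ × α) × β => p.1.1 * 1 :=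
    (measurable_fst.comp measurable_fst).mul_const 1
  calc ∫ ω in U ⁻¹' B ∩ V ⁻¹' C, Y ω ∂P
      = ∫ p in (univ ×ˢ B) ×ˢ C, p.1.1 * 1 ∂P.map (fun ω => ((Y ω, U ω), V ω)) := by
        rw [setIntegral_map ((MeasurableSet.univ.prod hB).prod hC) hfst.aestronglyMeasurable
          (hYU.prodMk hV)]
        simp only [mk_preimage_prod, preimage_univ, univ_inter, mul_one]
    _ = (∫ p in univ ×ˢ B, p.1 ∂P.map (fun ω => (Y ω, U ω))) * ∫ _ in C, 1 ∂P.map V := by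
        rw [hindep.map_prod_eq_prod_map_map hYU hV]
        exact setIntegral_prod_mul (fun p : ℝ × α => p.1) (fun _ => 1) _ _
    _ = (∫ ω in U ⁻¹' B, Y ω ∂P) * P.real (V ⁻¹' C) := by
        rw [← setIntegral_preimage_eq_setIntegral_map_prodMk hYU hB, setIntegral_const, smul_eq_mul,
          mul_one, map_measureReal_apply_of_aemeasurable hV hC]

end JointLaw

section IndependentSums

variable {Ω ι M : Type*} [MeasurableSpace Ω] {P : Measure Ω}

theorem identDistrib_comp_perm [Finite ι] [MeasurableSpace M] {X : ι → Ω → M}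
    (hindep : iIndepFun X P) {ν : Measure M} (hlaw : ∀ i, HasLaw (X i) ν P) (e : Equiv.Perm ι) :
    IdentDistrib (fun ω i => X (e i) ω) (fun ω i => X i ω) P P := by
  have := Fintype.ofFinite ι
  exact (iIndepFun.hasLaw_pi (fun i => hlaw (e i)) (hindep.precomp e.injective)).identDistrib
    (iIndepFun.hasLaw_pi hlaw hindep)

theorem identDistrib_prodMk_sum [AddCommMonoid M] [MeasurableSpace M] [MeasurableAdd₂ M]
    {X : ι → Ω → M} (hindep : iIndepFun X P) {ν : Measure M} (hlaw : ∀ i, HasLaw (X i) ν P)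
    {S : Finset ι} {j k : ι} (hj : j ∈ S) (hk : k ∈ S) :
    IdentDistrib (fun ω => (X j ω, ∑ i ∈ S, X i ω)) (fun ω => (X k ω, ∑ i ∈ S, X i ω)) P P := by
  classical
  let e : Equiv.Perm S := Equiv.swap ⟨j, hj⟩ ⟨k, hk⟩
  have hexch : IdentDistrib (fun ω (i : S) => X (e i) ω) (fun ω (i : S) => X i ω) P P :=
    identDistrib_comp_perm (X := fun i : S => X i) (hindep.precomp Subtype.val_injective)
      (fun i => hlaw i) e
  have hmeas : Measurable fun y : S → M => (y ⟨k, hk⟩, ∑ i, y i) := by fun_prop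
  convert hexch.comp hmeas using 1
  · ext ω : 1
    simp only [Function.comp_apply, Equiv.sum_comp e fun i : S => X i ω,
      S.sum_coe_sort fun i => X i ω, e, Equiv.swap_apply_right]
  · ext ω : 1
    simp only [Function.comp_apply, S.sum_coe_sort fun i => X i ω]

theorem indepFun_prodMk_sum_sum [AddCommMonoid M] [MeasurableSpace M] [MeasurableAdd₂ M]
    {X : ι → Ω → M} (hindep : iIndepFun X P) (hX : ∀ i, AEMeasurable (X i) P) {S T : Finset ι}
    (hST : Disjoint S T) {j : ι} (hj : j ∈ S) :
    IndepFun (fun ω => (X j ω, ∑ i ∈ S, X i ω)) (fun ω => ∑ i ∈ T, X i ω) P := by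
  have hleft : Measurable fun y : S → M => (y ⟨j, hj⟩, ∑ i, y i) := by fun_prop
  have hright : Measurable fun y : T → M => ∑ i, y i := by fun_prop
  convert (hindep.indepFun_finset₀ S T hST hX).comp hleft hright using 1
  · ext ω : 1
    simp only [Function.comp_apply, S.sum_coe_sort fun i => X i ω]
  · ext ω : 1
    simp only [Function.comp_apply, T.sum_coe_sort fun i => X i ω]

theorem hasLaw_sum_gaussianReal {X : ι → Ω → ℝ} (hindep : iIndepFun X P) {m : ι → ℝ}
    {v : ι → ℝ≥0} (hlaw : ∀ i, HasLaw (X i) (gaussianReal (m i) (v i)) P) (S : Finset ι) :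
    HasLaw (∑ i ∈ S, X i) (gaussianReal (∑ i ∈ S, m i) (∑ i ∈ S, v i)) P := by
  classical
  have : IsProbabilityMeasure P := hindep.isProbabilityMeasure
  induction S using Finset.induction_on with
  | empty =>
    simp only [Finset.sum_empty, gaussianReal_zero_var]
    exact hasLaw_dirac_of_ae_eq (ae_of_all _ fun _ => rfl)
  | insert a S ha ih =>
    have hadd := (hindep.indepFun_finsetSum_of_notMem₀ (fun i => (hlaw i).aemeasurable)
      ha).hasLaw_add ih (hlaw a)
    rw [gaussianReal_conv_gaussianReal] at hadd
    simpa only [Finset.sum_insert ha, add_comm] using hadd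

end IndependentSums

/-- The average `A_i` of the variables of a group `S = S_i`; it is `0` for the empty group. -/
noncomputable def sampleMean {Ω ι : Type*} (X : ι → Ω → ℝ) (S : Finset ι) (ω : Ω) : ℝ :=
  (S.card : ℝ)⁻¹ * ∑ i ∈ S, X i ω

section SampleMean

variable {Ω ι : Type*} [MeasurableSpace Ω] {P : Measure Ω} {X : ι → Ω → ℝ} {S T : Finset ι} {j : ι}

theorem aemeasurable_sampleMean (hX : ∀ i, AEMeasurable (X i) P) :
    AEMeasurable (sampleMean X S) P := by
  unfold sampleMean
  fun_prop

theorem hasLaw_sampleMean_gaussianReal (hindep : iIndepFun X P) {m : ℝ} {v : ℝ≥0}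
    (hlaw : ∀ i, HasLaw (X i) (gaussianReal m v) P) (hS : S.Nonempty) :
    HasLaw (sampleMean X S) (gaussianReal m (v / S.card)) P := by
  have hcard : (S.card : ℝ) ≠ 0 := by exact_mod_cast hS.card_ne_zero
  convert gaussianReal_const_mul (hasLaw_sum_gaussianReal hindep hlaw S) (S.card : ℝ)⁻¹ using 2
  · simp only [sampleMean, Finset.sum_apply]
  · rw [Finset.sum_const, nsmul_eq_mul, inv_mul_cancel_left₀ hcard]
  · ext
    simp only [NNReal.coe_div, NNReal.coe_natCast, Finset.sum_const, nsmul_eq_mul, NNReal.coe_mul,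
      NNReal.coe_mk]
    field_simp

theorem identDistrib_prodMk_sampleMean (hindep : iIndepFun X P) {ν : Measure ℝ}
    (hlaw : ∀ i, HasLaw (X i) ν P) {k : ι} (hj : j ∈ S) (hk : k ∈ S) :
    IdentDistrib (fun ω => (X j ω, sampleMean X S ω)) (fun ω => (X k ω, sampleMean X S ω)) P P :=
  (identDistrib_prodMk_sum hindep hlaw hj hk).comp (u := Prod.map id ((S.card : ℝ)⁻¹ * ·))
    (measurable_id.prodMap (measurable_const_mul _))

theorem setIntegral_sampleMean_preimage (hindep : iIndepFun X P) {ν : Measure ℝ}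
    (hlaw : ∀ i, HasLaw (X i) ν P) (hint : ∀ i, Integrable (X i) P) (hj : j ∈ S) {B : Set ℝ}
    (hB : MeasurableSet B) :
    ∫ ω in sampleMean X S ⁻¹' B, X j ω ∂P
      = ∫ ω in sampleMean X S ⁻¹' B, sampleMean X S ω ∂P := by
  have hcard : (S.card : ℝ) ≠ 0 := by exact_mod_cast (Finset.card_pos.mpr ⟨j, hj⟩).ne'
  have hexch (i : ι) (hi : i ∈ S) :
      ∫ ω in sampleMean X S ⁻¹' B, X i ω ∂P = ∫ ω in sampleMean X S ⁻¹' B, X j ω ∂P :=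
    setIntegral_preimage_eq_of_identDistrib_prodMk
      (identDistrib_prodMk_sampleMean hindep hlaw hi hj) hB
  calc ∫ ω in sampleMean X S ⁻¹' B, X j ω ∂P
      = (S.card : ℝ)⁻¹ * ∑ i ∈ S, ∫ ω in sampleMean X S ⁻¹' B, X i ω ∂P := by
        rw [Finset.sum_congr rfl hexch, Finset.sum_const, nsmul_eq_mul, inv_mul_cancel_left₀ hcard]
    _ = ∫ ω in sampleMean X S ⁻¹' B, sampleMean X S ω ∂P := by
        rw [← integral_finsetSum _ fun i _ => (hint i).integrableOn, ← integral_const_mul]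
        rfl

theorem setIntegral_sampleMean_preimage_inter_preimage (hindep : iIndepFun X P)
    (hX : ∀ i, AEMeasurable (X i) P) (hST : Disjoint S T) (hj : j ∈ S) {B C : Set ℝ}
    (hB : MeasurableSet B) (hC : MeasurableSet C) :
    ∫ ω in sampleMean X S ⁻¹' B ∩ sampleMean X T ⁻¹' C, X j ω ∂P
      = (∫ ω in sampleMean X S ⁻¹' B, X j ω ∂P) * P.real (sampleMean X T ⁻¹' C) := by
  have : IsProbabilityMeasure P := hindep.isProbabilityMeasure
  have hind : IndepFun (fun ω => (X j ω, sampleMean X S ω)) (sampleMean X T) P :=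
    (indepFun_prodMk_sum_sum hindep hX hST hj).comp
      (measurable_id.prodMap (measurable_const_mul (S.card : ℝ)⁻¹))
      (measurable_const_mul (T.card : ℝ)⁻¹)
  exact setIntegral_preimage_inter_preimage_of_indepFun hind
    ((hX j).prodMk (aemeasurable_sampleMean hX)) (aemeasurable_sampleMean hX) hB hC

variable {m : ℝ} {v : ℝ≥0}

theorem measureReal_sampleMean_preimage_Ioi (hindep : iIndepFun X P) (hv : v ≠ 0)
    (hlaw : ∀ i, HasLaw (X i) (gaussianReal m v) P) (hS : S.Nonempty) (t : ℝ) :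
    P.real (sampleMean X S ⁻¹' Ioi t) = stdCdf ((m - t) / √(v / S.card)) := by
  have hmean := hasLaw_sampleMean_gaussianReal hindep hlaw hS
  have hvar : v / S.card ≠ 0 := div_ne_zero hv (by exact_mod_cast hS.card_ne_zero)
  rw [← map_measureReal_apply_of_aemeasurable hmean.aemeasurable measurableSet_Ioi, hmean.map_eq,
    measureReal_Ioi_gaussianReal m hvar, NNReal.coe_div, NNReal.coe_natCast]

theorem setIntegral_sampleMean_preimage_Ioi (hindep : iIndepFun X P) (hv : v ≠ 0)
    (hlaw : ∀ i, HasLaw (X i) (gaussianReal m v) P) (hj : j ∈ S) (t : ℝ) :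
    ∫ ω in sampleMean X S ⁻¹' Ioi t, X j ω ∂P
      = m * stdCdf ((m - t) / √(v / S.card))
        + √(v / S.card) * stdPdf ((m - t) / √(v / S.card)) := by
  have hS : S.Nonempty := ⟨j, hj⟩
  have hmean := hasLaw_sampleMean_gaussianReal hindep hlaw hS
  have hvar : v / S.card ≠ 0 := div_ne_zero hv (by exact_mod_cast hS.card_ne_zero)
  calc ∫ ω in sampleMean X S ⁻¹' Ioi t, X j ω ∂P
      = ∫ ω in sampleMean X S ⁻¹' Ioi t, sampleMean X S ω ∂P :=
        setIntegral_sampleMean_preimage hindep hlaw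
          (fun i => (hlaw i).hasGaussianLaw.integrable) hj measurableSet_Ioi
    _ = ∫ x in Ioi t, x ∂gaussianReal m (v / S.card) := by
        rw [← hmean.map_eq, setIntegral_map measurableSet_Ioi (by fun_prop) hmean.aemeasurable]
    _ = _ := by
        rw [setIntegral_Ioi_gaussianReal m hvar, NNReal.coe_div, NNReal.coe_natCast]

theorem setIntegral_sampleMean_preimage_Ioi_inter_preimage_Ioi (hindep : iIndepFun X P) (hv : v ≠ 0)
    (hlaw : ∀ i, HasLaw (X i) (gaussianReal m v) P) (hST : Disjoint S T) (hj : j ∈ S)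
    (hT : T.Nonempty) (t u : ℝ) :
    ∫ ω in sampleMean X S ⁻¹' Ioi t ∩ sampleMean X T ⁻¹' Ioi u, X j ω ∂P
      = (m * stdCdf ((m - t) / √(v / S.card))
          + √(v / S.card) * stdPdf ((m - t) / √(v / S.card)))
        * stdCdf ((m - u) / √(v / T.card)) := by
  rw [setIntegral_sampleMean_preimage_inter_preimage hindep (fun i => (hlaw i).aemeasurable) hST hj
      measurableSet_Ioi measurableSet_Ioi,
    setIntegral_sampleMean_preimage_Ioi hindep hv hlaw hj,
    measureReal_sampleMean_preimage_Ioi hindep hv hlaw hT]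

end SampleMean

/-- Corollary 1, unanimous acceptance group rule: for every `j₁ ∈ S₁` and `j₂ ∈ S₂`,
`E[X_{j₁}·1_{G₁ ∩ G₂}] − E[X_{j₂}·1_{G₁ ∩ G₂}] = σ₁·f₁·F₂ − σ₂·f₂·F₁`. -/
theorem comparative_increment_unanimous_acceptance
    {Ω ι : Type*} [MeasureSpace Ω] [IsProbabilityMeasure (ℙ : Measure Ω)]
    (μ σ : ℝ) (hσ : 0 < σ)
    (X : ι → Ω → ℝ) (hmeas : ∀ j, Measurable (X j))
    (hindep : iIndepFun X ℙ)
    (hdist : ∀ j, Measure.map (X j) ℙ = gaussianReal μ ((σ ^ 2).toNNReal))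
    (S₁ S₂ : Finset ι) (hdisj : Disjoint S₁ S₂)
    (g₁ g₂ : ℕ) (hcard₁ : S₁.card = g₁) (hcard₂ : S₂.card = g₂)
    (hg₁ : 1 ≤ g₁) (hg₂ : 1 ≤ g₂)
    (t₁ t₂ : ℝ)
    (A₁ A₂ : Ω → ℝ)
    (hA₁ : A₁ = fun ω => (g₁ : ℝ)⁻¹ * ∑ j ∈ S₁, X j ω)
    (hA₂ : A₂ = fun ω => (g₂ : ℝ)⁻¹ * ∑ j ∈ S₂, X j ω)
    :
    ∀ j₁ ∈ S₁, ∀ j₂ ∈ S₂,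
      (∫ ω in {ω | t₁ < A₁ ω} ∩ {ω | t₂ < A₂ ω}, X j₁ ω) - (∫ ω in {ω | t₁ < A₁ ω} ∩ {ω | t₂ < A₂ ω}, X j₂ ω) =
        (σ / Real.sqrt g₁) * stdPdf ((μ - t₁) / (σ / Real.sqrt g₁)) * stdCdf ((μ - t₂) / (σ / Real.sqrt g₂)) - (σ / Real.sqrt g₂) * stdPdf ((μ - t₂) / (σ / Real.sqrt g₂)) * stdCdf ((μ - t₁) / (σ / Real.sqrt g₁)) := by
  subst hcard₁ hcard₂ hA₁ hA₂
  intro j₁ hj₁ j₂ hj₂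
  have hlaw (j : ι) : HasLaw (X j) (gaussianReal μ (σ ^ 2).toNNReal) ℙ :=
    ⟨(hmeas j).aemeasurable, hdist j⟩
  have hvar : (σ ^ 2).toNNReal ≠ 0 := (toNNReal_pos.mpr (pow_pos hσ 2)).ne'
  have hsd (g : ℕ) : √((σ ^ 2).toNNReal / g) = σ / √g := by
    rw [coe_toNNReal _ (sq_nonneg σ), sqrt_div (sq_nonneg σ), sqrt_sq hσ.le]
  have hint₁ := setIntegral_sampleMean_preimage_Ioi_inter_preimage_Ioi hindep hvar hlaw hdisj hj₁
    ⟨j₂, hj₂⟩ t₁ t₂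
  have hint₂ := setIntegral_sampleMean_preimage_Ioi_inter_preimage_Ioi hindep hvar hlaw hdisj.symm
    hj₂ ⟨j₁, hj₁⟩ t₂ t₁
  rw [inter_comm] at hint₂
  rw [hsd, hsd] at hint₁ hint₂
  refine (congrArg₂ (· - ·) hint₁ hint₂).trans ?_
  ring
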